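/- There exists a constant C > 0, depending only on n, such that for every b ∈ BMO(ℝ^n), every decreasing sequence {t_k}_{k≥0} of dyadic stopping times, and every cube Q ⊂ ℝ^n with side length ℓ(Q), Σ_{k≥0} ∫_Q χ_{{x : 2^{t_k(x)} ≤ ℓ(Q)}}(x) |E_{t_{k+1}} b(x) − E_{t_k} b(x)|² dx ≤ C ‖b‖_{BMO}² |Q|; the constant C does not depend on the stopping times. -/

import Mathlib

open MeasureTheory ENNReal NNReal
noncomputable section

/-- The dyadic cube of side length `2^j` (from the grid `∏ (m_i 2^j, (m_i+1) 2^j]`)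
containing the point `x`. -/
def dyadicCubeOf (n : ℕ) (j : ℤ) (x : EuclideanSpace ℝ (Fin n)) :
    Set (EuclideanSpace ℝ (Fin n)) :=
  {y | ∀ i, ((⌈x i / (2:ℝ) ^ j⌉ : ℝ) - 1) * (2:ℝ) ^ j < y i ∧
        y i ≤ (⌈x i / (2:ℝ) ^ j⌉ : ℝ) * (2:ℝ) ^ j}

/-- The dyadic conditional expectation `E_j f (x)`: the average of `f` over the dyadic
cube of side length `2^j` containing `x`. -/
def dyadicAvg (n : ℕ) (j : ℤ) (f : EuclideanSpace ℝ (Fin n) → ℝ)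
    (x : EuclideanSpace ℝ (Fin n)) : ℝ :=
  ⨍ y in dyadicCubeOf n j x, f y

/-- The (half-open) cube with corner `a` and side length `ℓ`. -/
def cube (n : ℕ) (a : EuclideanSpace ℝ (Fin n)) (ℓ : ℝ) :
    Set (EuclideanSpace ℝ (Fin n)) :=
  {y | ∀ i, a i < y i ∧ y i ≤ a i + ℓ}

/-- `t : ℝⁿ → ℤ` is a dyadic stopping time: it is measurable and each level set
`{t = j}` is a union of dyadic cubes in `𝒟_j`, i.e. `t` is constant on the dyadic cube
of scale `t x` containing `x`. -/
def IsDyadicStopping (n : ℕ) (t : EuclideanSpace ℝ (Fin n) → ℤ) : Prop :=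
  Measurable t ∧ ∀ x y, y ∈ dyadicCubeOf n (t x) x → t y = t x

/-! Let `J` be the largest integer with `2 ^ J ≤ ℓ`. Where `2 ^ t_k ≤ ℓ` nothing changes if each
`t_k` is replaced by `min t_k J`, and `Q` may be replaced by the union `U` of the cubes of `𝒟_J`
meeting it, whose measure is at most `3 ^ n |Q|`. On `U` the operator `E_t` of a stopping time `t ≤
J` is the conditional expectation given the `σ`-algebra of the cubes selected by `t`, so the terms
`E_{t_{k+1}} b - E_{t_k} b` are orthogonal martingale differences, and their squared norms add up to
at most that of the difference of the conditional expectations of `b` given all dyadic cubes of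
scale `≤ J` and given `𝒟_J`. That norm is controlled by an `L²` John–Nirenberg inequality for
martingales with bounded mean oscillation and bounded increments. -/

open Filter Topology ProbabilityTheory

lemma memLp_two_and_integral_sq_le_of_tendsto_ae {Ω : Type*} {m0 : MeasurableSpace Ω}
    {μ : Measure Ω} {g : ℕ → Ω → ℝ} {h : Ω → ℝ} {C : ℝ}
    (hg : ∀ n, MemLp (g n) 2 μ) (hC : ∀ n, ∫ x, g n x ^ 2 ∂μ ≤ C)
    (hlim : ∀ᵐ x ∂μ, Tendsto (fun n ↦ g n x) atTop (𝓝 (h x))) :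
    MemLp h 2 μ ∧ ∫ x, h x ^ 2 ∂μ ≤ C := by
  have hh : AEStronglyMeasurable h μ :=
    aestronglyMeasurable_of_tendsto_ae _ (fun n ↦ (hg n).aestronglyMeasurable) hlim
  have hC0 : 0 ≤ C := (integral_nonneg fun _ ↦ sq_nonneg _).trans (hC 0)
  have hfatou : ∫⁻ x, .ofReal (h x ^ 2) ∂μ ≤ .ofReal C :=
    calc ∫⁻ x, .ofReal (h x ^ 2) ∂μ
        = ∫⁻ x, liminf (fun n ↦ .ofReal (g n x ^ 2)) atTop ∂μ :=
          lintegral_congr_ae <| hlim.mono fun x hx ↦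
            (((ENNReal.continuous_ofReal.tendsto _).comp (hx.pow 2)).liminf_eq).symm
      _ ≤ liminf (fun n ↦ ∫⁻ x, .ofReal (g n x ^ 2) ∂μ) atTop :=
          lintegral_liminf_le' fun n ↦
            ((hg n).aestronglyMeasurable.aemeasurable.pow_const 2).ennreal_ofReal
      _ ≤ .ofReal C := by
          refine liminf_le_of_frequently_le' (.of_forall fun n ↦ ?_)
          rw [← ofReal_integral_eq_lintegral_ofReal (hg n).integrable_sq
            (ae_of_all _ fun _ ↦ sq_nonneg _)]
          exact ENNReal.ofReal_le_ofReal (hC n)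
  constructor
  · refine (memLp_two_iff_integrable_sq hh).2 ⟨hh.pow 2, ?_⟩
    rw [hasFiniteIntegral_iff_ofReal (ae_of_all _ fun _ ↦ sq_nonneg _)]
    exact hfatou.trans_lt ENNReal.ofReal_lt_top
  · rw [integral_eq_lintegral_of_nonneg_ae (ae_of_all _ fun _ ↦ sq_nonneg _) (hh.pow 2)]
    exact ENNReal.toReal_le_of_le_ofReal hC0 hfatou

lemma abs_setAverage_sub_le_of_subset {Ω : Type*} {m0 : MeasurableSpace Ω} {μ : Measure Ω}
    {s t : Set Ω} (hst : s ⊆ t) (hs : μ s ≠ 0) (ht : μ t ≠ ∞) {f : Ω → ℝ}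
    (hf : IntegrableOn f t μ) (c : ℝ) :
    |⨍ x in s, f x ∂μ - c| ≤ μ.real t / μ.real s * ⨍ x in t, |f x - c| ∂μ := by
  have hs_top : μ s ≠ ∞ := measure_ne_top_of_subset hst ht
  have hs_pos : 0 < μ.real s := ENNReal.toReal_pos hs hs_top
  rw [div_mul_eq_mul_div, le_div_iff₀' hs_pos]
  calc μ.real s * |⨍ x in s, f x ∂μ - c|
      = |∫ x in s, (f x - c) ∂μ| := by
        rw [integral_sub (hf.mono_set hst) (integrableOn_const hs_top), setIntegral_const,
          ← measure_smul_setAverage f hs_top, ← smul_sub, smul_eq_mul, abs_mul,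
          abs_of_pos hs_pos]
    _ ≤ ∫ x in s, |f x - c| ∂μ := abs_integral_le_integral_abs
    _ ≤ ∫ x in t, |f x - c| ∂μ :=
        setIntegral_mono_set (hf.sub (integrableOn_const ht)).abs
          (ae_of_all _ fun _ ↦ abs_nonneg _) hst.eventuallyLE
    _ = μ.real t * ⨍ x in t, |f x - c| ∂μ := (measure_smul_setAverage _ ht).symm

section CondExp

variable {Ω : Type*} {m m0 : MeasurableSpace Ω} {μ : Measure Ω} [IsFiniteMeasure μ]

lemma condExp_sub_ae_eq_of_stronglyMeasurable (hm : m ≤ m0) {f u : Ω → ℝ} (hf : Integrable f μ)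
    (hu : StronglyMeasurable[m] u) (hui : Integrable u μ) : μ[f - u | m] =ᵐ[μ] μ[f | m] - u := by
  have h := condExp_sub hf hui m
  rwa [condExp_of_stronglyMeasurable hm hu hui] at h

lemma setIntegral_sq_eq_add_of_condExp_ae_eq (hm : m ≤ m0) {g u : Ω → ℝ} (hg : MemLp g 2 μ)
    (hu : μ[g | m] =ᵐ[μ] u) {A : Set Ω} (hA : MeasurableSet[m] A) :
    ∫ x in A, g x ^ 2 ∂μ = ∫ x in A, (g x - u x) ^ 2 ∂μ + ∫ x in A, u x ^ 2 ∂μ := by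
  have hE : MemLp (μ[g | m]) 2 μ := hg.condExp one_le_two
  have hvar : ∫ x in A, Var[g; μ | m] x ∂μ = ∫ x in A, ((μ[g ^ 2 | m]) x - (μ[g | m]) x ^ 2) ∂μ :=
    integral_congr_ae (ae_restrict_of_ae (condVar_ae_eq_condExp_sq_sub_sq_condExp hm hg))
  rw [setIntegral_condVar (hm := hm) (hg.sub hE).integrable_sq hA,
    integral_sub integrable_condExp.integrableOn hE.integrable_sq.integrableOn,
    setIntegral_condExp hm (show Integrable (g ^ 2) μ from hg.integrable_sq) hA] at hvar
  have hdiff : ∫ x in A, (g x - (μ[g | m]) x) ^ 2 ∂μ = ∫ x in A, (g x - u x) ^ 2 ∂μ :=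
    integral_congr_ae (ae_restrict_of_ae (hu.mono fun x hx ↦ by simp only [hx]))
  have hsq : ∫ x in A, (μ[g | m]) x ^ 2 ∂μ = ∫ x in A, u x ^ 2 ∂μ :=
    integral_congr_ae (ae_restrict_of_ae (hu.mono fun x hx ↦ by simp only [hx]))
  rw [← hdiff, ← hsq]
  exact eq_add_of_sub_eq hvar.symm

lemma sum_integral_sq_condExp_succ_sub_condExp_le (𝒢 : Filtration ℕ m0) {g : Ω → ℝ}
    (hg : MemLp g 2 μ) (K : ℕ) :
    ∑ k ∈ Finset.range K, ∫ x, ((μ[g | 𝒢 (k + 1)]) x - (μ[g | 𝒢 k]) x) ^ 2 ∂μ ≤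
      ∫ x, g x ^ 2 ∂μ := by
  have hpyth (k : ℕ) : ∫ x, ((μ[g | 𝒢 (k + 1)]) x - (μ[g | 𝒢 k]) x) ^ 2 ∂μ =
      ∫ x, (μ[g | 𝒢 (k + 1)]) x ^ 2 ∂μ - ∫ x, (μ[g | 𝒢 k]) x ^ 2 ∂μ := by
    have h := setIntegral_sq_eq_add_of_condExp_ae_eq (𝒢.le k)
      (hg.condExp (m := 𝒢 (k + 1)) one_le_two)
      (condExp_condExp_of_le (𝒢.mono k.le_succ) (𝒢.le _)) MeasurableSet.univ
    simp only [setIntegral_univ] at h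
    exact eq_sub_of_add_eq h.symm
  have hK := setIntegral_sq_eq_add_of_condExp_ae_eq (𝒢.le K) hg .rfl MeasurableSet.univ
  simp only [setIntegral_univ] at hK
  have h0 : 0 ≤ ∫ x, (μ[g | 𝒢 0]) x ^ 2 ∂μ := by positivity
  have hrest : 0 ≤ ∫ x, (g x - (μ[g | 𝒢 K]) x) ^ 2 ∂μ := by positivity
  simp only [hpyth, Finset.sum_range_sub fun k ↦ ∫ x, (μ[g | 𝒢 k]) x ^ 2 ∂μ]
  linarith

lemma tsum_lintegral_sq_condExp_succ_sub_condExp_le (𝒢 : Filtration ℕ m0) {g : Ω → ℝ}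
    (hg : MemLp g 2 μ) :
    ∑' k, ∫⁻ x, .ofReal (((μ[g | 𝒢 (k + 1)]) x - (μ[g | 𝒢 k]) x) ^ 2) ∂μ ≤
      .ofReal (∫ x, g x ^ 2 ∂μ) := by
  have hsq (k : ℕ) :
      ∫⁻ x, .ofReal (((μ[g | 𝒢 (k + 1)]) x - (μ[g | 𝒢 k]) x) ^ 2) ∂μ =
        .ofReal (∫ x, ((μ[g | 𝒢 (k + 1)]) x - (μ[g | 𝒢 k]) x) ^ 2 ∂μ) :=
    (ofReal_integral_eq_lintegral_ofReal
      ((hg.condExp one_le_two).sub (hg.condExp one_le_two)).integrable_sq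
      (ae_of_all _ fun _ ↦ sq_nonneg _)).symm
  refine ENNReal.tsum_le_of_sum_range_le fun K ↦ ?_
  simp only [hsq]
  rw [← ENNReal.ofReal_sum_of_nonneg fun k _ ↦ by positivity]
  exact ENNReal.ofReal_le_ofReal (sum_integral_sq_condExp_succ_sub_condExp_le 𝒢 hg K)

lemma tsum_lintegral_sq_condExp_succ_sub_condExp_le_of_le {m₁ m₂ : MeasurableSpace Ω}
    (𝒢 : Filtration ℕ m0) (hm₁ : ∀ k, m₁ ≤ 𝒢 k) (hm₂ : ∀ k, 𝒢 k ≤ m₂) (hm₂0 : m₂ ≤ m0)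
    {f : Ω → ℝ} (hf : MemLp (μ[f | m₂] - μ[f | m₁]) 2 μ) :
    ∑' k, ∫⁻ x, .ofReal (((μ[f | 𝒢 (k + 1)]) x - (μ[f | 𝒢 k]) x) ^ 2) ∂μ ≤
      .ofReal (∫ x, ((μ[f | m₂]) x - (μ[f | m₁]) x) ^ 2 ∂μ) := by
  have hproj (k : ℕ) : μ[μ[f | m₂] - μ[f | m₁] | 𝒢 k] =ᵐ[μ] μ[f | 𝒢 k] - μ[f | m₁] :=
    (condExp_sub_ae_eq_of_stronglyMeasurable (𝒢.le k) integrable_condExp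
      (stronglyMeasurable_condExp.mono (hm₁ k)) integrable_condExp).trans
      ((condExp_condExp_of_le (hm₂ k) hm₂0).sub .rfl)
  refine (le_of_eq (tsum_congr fun k ↦ lintegral_congr_ae ?_)).trans
    (tsum_lintegral_sq_condExp_succ_sub_condExp_le 𝒢 hf)
  filter_upwards [hproj k, hproj (k + 1)] with x hx hx'
  simp only [hx, hx', Pi.sub_apply, sub_sub_sub_cancel_right]

lemma condExp_comap_ae_eq_setAverage_fiber {ι : Type*} [MeasurableSpace ι]
    [MeasurableSingletonClass ι] [Countable ι] {π : Ω → ι} (hπ : Measurable π) {f : Ω → ℝ}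
    (hf : Integrable f μ) :
    μ[f | MeasurableSpace.comap π inferInstance] =ᵐ[μ] fun x ↦ ⨍ y in π ⁻¹' {π x}, f y ∂μ := by
  have hnull : ∀ᵐ x ∂μ, μ (π ⁻¹' {π x}) ≠ 0 := by
    refine measure_mono_null (fun x hx ↦ ?_) ((measure_biUnion_null_iff
      (Set.to_countable {i | μ (π ⁻¹' {i}) = 0}) (s := fun i ↦ π ⁻¹' {i})).2 fun i hi ↦ hi)
    exact Set.mem_biUnion (x := π x) (not_not.1 hx) rfl
  filter_upwards [hnull] with x hx
  have hS : MeasurableSet (π ⁻¹' {π x}) := hπ (measurableSet_singleton _)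
  have hconst : ∀ y ∈ π ⁻¹' {π x}, (μ[f | MeasurableSpace.comap π inferInstance]) y =
      (μ[f | MeasurableSpace.comap π inferInstance]) x :=
    fun y hy ↦ stronglyMeasurable_condExp.factorsThrough hy
  rw [setAverage_eq, ← setIntegral_condExp hπ.comap_le hf ⟨_, measurableSet_singleton _, rfl⟩,
    setIntegral_congr_fun hS hconst, setIntegral_const, smul_eq_mul, smul_eq_mul,
    inv_mul_cancel_left₀ ((measureReal_ne_zero_iff (measure_ne_top μ _)).2 hx)]

end CondExp

section JohnNirenberg

variable {Ω : Type*} {m0 : MeasurableSpace Ω} {μ : Measure Ω}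
  {ℱ : Filtration ℕ m0} {f : ℕ → Ω → ℝ}

lemma integrable_abs_martingale_sub (hf : Martingale f ℱ μ) (i n : ℕ) :
    Integrable (fun x ↦ |f n x - f i x|) μ :=
  ((hf.integrable n).sub (hf.integrable i)).abs

lemma measurableSet_abs_martingale_sub_le (hf : Martingale f ℱ μ) {i j : ℕ} (hij : i ≤ j)
    (r : ℝ) : MeasurableSet[ℱ j] {x | |f j x - f i x| ≤ r} :=
  ((hf.stronglyMeasurable j).sub
    ((hf.stronglyMeasurable i).mono (ℱ.mono hij))).norm.measurable measurableSet_Iic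

variable [IsFiniteMeasure μ]

lemma memLp_sub_of_bdd_increments (hf : Martingale f ℱ μ) {D : ℝ}
    (hD : ∀ i, ∀ᵐ x ∂μ, |f (i + 1) x - f i x| ≤ D) {p : ℝ≥0∞} {i n : ℕ} (hin : i ≤ n) :
    MemLp (f n - f i) p μ := by
  induction n, hin using Nat.le_induction with
  | base => rw [sub_self]; exact MemLp.zero
  | succ n _ ih =>
    rw [← sub_add_sub_cancel (f (n + 1)) (f n) (f i)]
    exact (MemLp.of_bound ((hf.integrable _).sub (hf.integrable _)).aestronglyMeasurable D
      (hD n)).add ih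

lemma condExp_martingale_sub_ae_eq (hf : Martingale f ℱ μ) {i j n : ℕ} (hij : i ≤ j)
    (hjn : j ≤ n) : μ[f n - f i | ℱ j] =ᵐ[μ] f j - f i :=
  (condExp_sub_ae_eq_of_stronglyMeasurable (ℱ.le j) (hf.integrable n)
    ((hf.stronglyMeasurable i).mono (ℱ.mono hij)) (hf.integrable i)).trans
    ((hf.condExp_ae_eq hjn).sub .rfl)

lemma setIntegral_abs_martingale_sub_le (hf : Martingale f ℱ μ) {i j n : ℕ} (hij : i ≤ j)
    (hjn : j ≤ n) {A : Set Ω} (hA : MeasurableSet[ℱ j] A) :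
    ∫ x in A, |f j x - f i x| ∂μ ≤ ∫ x in A, |f n x - f i x| ∂μ := by
  have hcond : ∫ x in A, |(μ[f n - f i | ℱ j]) x| ∂μ = ∫ x in A, |f j x - f i x| ∂μ :=
    integral_congr_ae (ae_restrict_of_ae
      ((condExp_martingale_sub_ae_eq hf hij hjn).mono fun x hx ↦ by simp only [hx, Pi.sub_apply]))
  rw [← hcond]
  exact setIntegral_abs_condExp_le hA (f n - f i)

lemma mul_setIntegral_sq_martingale_sub_le (hf : Martingale f ℱ μ) {i j n : ℕ} (hij : i ≤ j)
    (hjn : j ≤ n) (hLp : MemLp (f n - f i) 2 μ) {A : Set Ω} (hA : MeasurableSet[ℱ j] A)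
    {K r B : ℝ} (hK : 0 ≤ K) (hr : 0 ≤ r) (hle : ∀ x ∈ A, r ≤ |f j x - f i x|)
    (hB : ∀ᵐ x ∂μ, x ∈ A → |f j x - f i x| ≤ B)
    (hvar : ∫ x in A, (f n x - f j x) ^ 2 ∂μ ≤ K * μ.real A) :
    r * ∫ x in A, (f n x - f i x) ^ 2 ∂μ ≤ (K + B ^ 2) * ∫ x in A, |f n x - f i x| ∂μ := by
  have hA0 : MeasurableSet A := ℱ.le j A hA
  have hpyth : ∫ x in A, (f n x - f i x) ^ 2 ∂μ =
      ∫ x in A, (f n x - f j x) ^ 2 ∂μ + ∫ x in A, (f j x - f i x) ^ 2 ∂μ := by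
    simpa only [Pi.sub_apply, sub_sub_sub_cancel_right] using
      setIntegral_sq_eq_add_of_condExp_ae_eq (ℱ.le j) hLp
        (condExp_martingale_sub_ae_eq hf hij hjn) hA
  have hsq : ∫ x in A, (f j x - f i x) ^ 2 ∂μ ≤ B ^ 2 * μ.real A :=
    (Real.le_norm_self _).trans <| norm_setIntegral_le_of_norm_le_const_ae'
      (measure_lt_top μ A) (hB.mono fun x hx hxA ↦ by
        rw [Real.norm_eq_abs, abs_pow]
        exact pow_le_pow_left₀ (abs_nonneg _) (hx hxA) 2)
  have hrA : r * μ.real A ≤ ∫ x in A, |f n x - f i x| ∂μ :=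
    (setIntegral_ge_of_const_le_real hA0 (measure_ne_top μ A) hle
      (integrable_abs_martingale_sub hf i j).integrableOn).trans
      (setIntegral_abs_martingale_sub_le hf hij hjn hA)
  calc r * ∫ x in A, (f n x - f i x) ^ 2 ∂μ
      ≤ r * (K * μ.real A + B ^ 2 * μ.real A) := by rw [hpyth]; gcongr
    _ = (K + B ^ 2) * (r * μ.real A) := by ring
    _ ≤ (K + B ^ 2) * ∫ x in A, |f n x - f i x| ∂μ := by gcongr

lemma mul_setIntegral_sq_martingale_sub_le_of_inter (hf : Martingale f ℱ μ) {i j n : ℕ}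
    (hij : i ≤ j) (hjn : j ≤ n) (hLp : MemLp (f n - f i) 2 μ) {A : Set Ω}
    (hA : MeasurableSet[ℱ j] A) {K r B : ℝ} (hK : 0 ≤ K) (hr : 0 ≤ r)
    (hB : ∀ᵐ x ∂μ, x ∈ A → |f j x - f i x| ≤ B)
    (hvar : ∀ A, MeasurableSet[ℱ j] A → ∫ x in A, (f n x - f j x) ^ 2 ∂μ ≤ K * μ.real A)
    (hsmall : r * ∫ x in A ∩ {x | |f j x - f i x| ≤ r}, (f n x - f i x) ^ 2 ∂μ ≤
      r ^ 3 * μ.real (A ∩ {x | |f j x - f i x| ≤ r}) +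
        (K + B ^ 2) * ∫ x in A ∩ {x | |f j x - f i x| ≤ r}, |f n x - f i x| ∂μ) :
    r * ∫ x in A, (f n x - f i x) ^ 2 ∂μ ≤
      r ^ 3 * μ.real A + (K + B ^ 2) * ∫ x in A, |f n x - f i x| ∂μ := by
  set S := {x | |f j x - f i x| ≤ r}
  have hS : MeasurableSet[ℱ j] S := measurableSet_abs_martingale_sub_le hf hij r
  have hbig := mul_setIntegral_sq_martingale_sub_le hf hij hjn hLp (hA.diff hS) hK hr
    (fun x hx ↦ (not_le.1 hx.2).le) (hB.mono fun x hx hxA ↦ hx hxA.1) (hvar _ (hA.diff hS))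
  rw [← integral_inter_add_sdiff (ℱ.le j S hS)
      (show Integrable (fun x ↦ (f n x - f i x) ^ 2) μ from hLp.integrable_sq).integrableOn,
    ← integral_inter_add_sdiff (ℱ.le j S hS)
      (integrable_abs_martingale_sub hf i n).integrableOn]
  have hmono : r ^ 3 * μ.real (A ∩ S) ≤ r ^ 3 * μ.real A :=
    mul_le_mul_of_nonneg_left (measureReal_mono Set.inter_subset_left) (by positivity)
  linarith

-- Backward induction on `j`: the mass of `A` is peeled off at the first time `≥ j` at which
-- `|f j - f i|` exceeds `r`, where it is at most `r + D`.
lemma mul_setIntegral_sq_martingale_sub_le_of_later (hf : Martingale f ℱ μ) {D : ℝ}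
    (hD : ∀ i, ∀ᵐ x ∂μ, |f (i + 1) x - f i x| ≤ D) {i n : ℕ} {K r : ℝ} (hK : 0 ≤ K) (hr : 0 ≤ r)
    (hvar : ∀ j, i < j → j ≤ n → ∀ A, MeasurableSet[ℱ j] A →
      ∫ x in A, (f n x - f j x) ^ 2 ∂μ ≤ K * μ.real A)
    {j : ℕ} (hij : i < j) (hjn : j ≤ n) {A : Set Ω} (hA : MeasurableSet[ℱ j] A)
    (hAD : ∀ᵐ x ∂μ, x ∈ A → |f j x - f i x| ≤ r + D) :
    r * ∫ x in A, (f n x - f i x) ^ 2 ∂μ ≤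
      r ^ 3 * μ.real A + (K + (r + D) ^ 2) * ∫ x in A, |f n x - f i x| ∂μ := by
  have hLp : MemLp (f n - f i) 2 μ := memLp_sub_of_bdd_increments hf hD (hij.le.trans hjn)
  induction hjn using Nat.decreasingInduction generalizing A with
  | self =>
    refine mul_setIntegral_sq_martingale_sub_le_of_inter hf hij.le le_rfl hLp hA hK hr hAD
      (hvar n hij le_rfl) ?_
    set S := A ∩ {x | |f n x - f i x| ≤ r}
    have hsq : ∫ x in S, (f n x - f i x) ^ 2 ∂μ ≤ r ^ 2 * μ.real S :=
      (Real.le_norm_self _).trans <| norm_setIntegral_le_of_norm_le_const (measure_lt_top μ S)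
        fun x hx ↦ by
          rw [Real.norm_eq_abs, abs_pow]
          exact pow_le_pow_left₀ (abs_nonneg _) hx.2 2
    calc r * ∫ x in S, (f n x - f i x) ^ 2 ∂μ
        ≤ r * (r ^ 2 * μ.real S) := by gcongr
      _ = r ^ 3 * μ.real S := by ring
      _ ≤ _ := le_add_of_nonneg_right (by positivity)
  | of_succ j hjn ih =>
    refine mul_setIntegral_sq_martingale_sub_le_of_inter hf hij.le hjn.le hLp hA hK hr hAD
      (hvar j hij hjn.le) (ih (hij.trans j.lt_succ_self) ?_ ?_)
    · exact ℱ.mono j.le_succ _ (hA.inter (measurableSet_abs_martingale_sub_le hf hij.le r))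
    · filter_upwards [hD j] with x hx hxA
      have habs := abs_sub_le (f (j + 1) x) (f j x) (f i x)
      linarith [hxA.2.out]

-- The constant `K = 8 * M ^ 2 + (2 * M + D) ^ 2` is the one that the peeling inequality with
-- `r = 2 * M` reproduces:
-- `(2 * M) ^ 3 + (K + (2 * M + D) ^ 2) * M = 2 * M * K`.
lemma setIntegral_sq_martingale_sub_le (hf : Martingale f ℱ μ) {M D : ℝ} (hM : 0 ≤ M)
    (hD : ∀ i, ∀ᵐ x ∂μ, |f (i + 1) x - f i x| ≤ D) {n : ℕ}
    (hosc : ∀ i ≤ n, ∀ A, MeasurableSet[ℱ i] A → ∫ x in A, |f n x - f i x| ∂μ ≤ M * μ.real A)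
    {i : ℕ} (hin : i ≤ n) {A : Set Ω} (hA : MeasurableSet[ℱ i] A) :
    ∫ x in A, (f n x - f i x) ^ 2 ∂μ ≤ (8 * M ^ 2 + (2 * M + D) ^ 2) * μ.real A := by
  set K := 8 * M ^ 2 + (2 * M + D) ^ 2 with hK
  have hK0 : 0 ≤ K := by positivity
  rcases hM.eq_or_lt with rfl | hM
  · have hzero : ∫ x in A, |f n x - f i x| ∂μ = 0 :=
      ((hosc i hin A hA).trans_eq (zero_mul _)).antisymm (by positivity)
    rw [integral_eq_zero_iff_of_nonneg (fun _ ↦ abs_nonneg _)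
      (integrable_abs_martingale_sub hf i n).integrableOn] at hzero
    rw [integral_eq_zero_of_ae (hzero.mono fun x hx ↦ by simpa using hx)]
    positivity
  induction hd : n - i using Nat.strong_induction_on generalizing i A with
  | _ d ih =>
  rcases hin.eq_or_lt with rfl | hin
  · simpa using mul_nonneg hK0 measureReal_nonneg
  have hlater := mul_setIntegral_sq_martingale_sub_le_of_later hf hD hK0
    (mul_nonneg zero_le_two hM.le)
    (fun j hij hjn A hA ↦ ih (n - j) (by omega) hjn hA rfl) i.lt_succ_self hin
    (ℱ.mono i.le_succ A hA)
    ((hD i).mono fun x hx _ ↦ hx.trans (le_add_of_nonneg_left (by positivity)))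
  refine le_of_mul_le_mul_left (hlater.trans ?_) (mul_pos zero_lt_two hM)
  calc (2 * M) ^ 3 * μ.real A + (K + (2 * M + D) ^ 2) * ∫ x in A, |f n x - f i x| ∂μ
      ≤ (2 * M) ^ 3 * μ.real A + (K + (2 * M + D) ^ 2) * (M * μ.real A) := by
        gcongr; exact hosc i hin.le A hA
    _ = 2 * M * (K * μ.real A) := by rw [hK]; ring

lemma setIntegral_abs_condExp_sub_condExp_le {g : Ω → ℝ} (hg : Integrable g μ) {i n : ℕ}
    (hin : i ≤ n) {M : ℝ} (hosc : μ[(fun x ↦ |g x - (μ[g | ℱ i]) x|) | ℱ i] ≤ᵐ[μ] fun _ ↦ M)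
    {A : Set Ω} (hA : MeasurableSet[ℱ i] A) :
    ∫ x in A, |(μ[g | ℱ n]) x - (μ[g | ℱ i]) x| ∂μ ≤ M * μ.real A := by
  have hdiff : μ[g - μ[g | ℱ i] | ℱ n] =ᵐ[μ] μ[g | ℱ n] - μ[g | ℱ i] :=
    condExp_sub_ae_eq_of_stronglyMeasurable (ℱ.le n) hg
      (stronglyMeasurable_condExp.mono (ℱ.mono hin)) integrable_condExp
  calc ∫ x in A, |(μ[g | ℱ n]) x - (μ[g | ℱ i]) x| ∂μ
      = ∫ x in A, |(μ[g - μ[g | ℱ i] | ℱ n]) x| ∂μ :=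
        integral_congr_ae (ae_restrict_of_ae
          (hdiff.mono fun x hx ↦ by simp only [hx, Pi.sub_apply]))
    _ ≤ ∫ x in A, |g x - (μ[g | ℱ i]) x| ∂μ :=
        setIntegral_abs_condExp_le (ℱ.mono hin A hA) (g - μ[g | ℱ i])
    _ = ∫ x in A, (μ[(fun x ↦ |g x - (μ[g | ℱ i]) x|) | ℱ i]) x ∂μ :=
        (setIntegral_condExp (ℱ.le i) (hg.sub integrable_condExp).abs hA).symm
    _ ≤ ∫ _ in A, M ∂μ :=
        setIntegral_mono_ae integrable_condExp.integrableOn (integrable_const M).integrableOn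
          hosc
    _ = M * μ.real A := by rw [setIntegral_const, smul_eq_mul, mul_comm]

lemma memLp_two_and_integral_sq_condExp_iSup_sub_le {g : Ω → ℝ} (hg : Integrable g μ) {M D : ℝ}
    (hM : 0 ≤ M) (hosc : ∀ i, μ[(fun x ↦ |g x - (μ[g | ℱ i]) x|) | ℱ i] ≤ᵐ[μ] fun _ ↦ M)
    (hD : ∀ i, ∀ᵐ x ∂μ, |(μ[g | ℱ (i + 1)]) x - (μ[g | ℱ i]) x| ≤ D) :
    MemLp (μ[g | ⨆ i, ℱ i] - μ[g | ℱ 0]) 2 μ ∧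
      ∫ x, ((μ[g | ⨆ i, ℱ i]) x - (μ[g | ℱ 0]) x) ^ 2 ∂μ ≤
        (8 * M ^ 2 + (2 * M + D) ^ 2) * μ.real Set.univ := by
  have hmart : Martingale (fun i ↦ μ[g | ℱ i]) ℱ μ := martingale_condExp g ℱ μ
  refine memLp_two_and_integral_sq_le_of_tendsto_ae (g := fun n ↦ μ[g | ℱ n] - μ[g | ℱ 0])
    (fun n ↦ memLp_sub_of_bdd_increments hmart hD n.zero_le) (fun n ↦ ?_) ?_
  · simpa only [setIntegral_univ, Pi.sub_apply] using
      setIntegral_sq_martingale_sub_le hmart hM hD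
        (fun i hin A hA ↦ setIntegral_abs_condExp_sub_condExp_le hg hin (hosc i) hA)
        n.zero_le MeasurableSet.univ
  · filter_upwards [tendsto_ae_condExp (ℱ := ℱ) g] with x hx
    exact hx.sub_const _

end JohnNirenberg

section DyadicCubes

variable {n : ℕ}

/-- The index `m ∈ ℤⁿ` of the cube `∏ (m_i 2^j, (m_i + 1) 2^j]` of `𝒟_j` containing `x`, shifted by
one in each coordinate so that it can be read off with `Int.ceil`. -/
def dyadicIndex (j : ℤ) (x : EuclideanSpace ℝ (Fin n)) : Fin n → ℤ :=
  fun i ↦ ⌈x i / (2 : ℝ) ^ j⌉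

lemma mem_dyadicCubeOf_iff {j : ℤ} {x y : EuclideanSpace ℝ (Fin n)} :
    y ∈ dyadicCubeOf n j x ↔ dyadicIndex j y = dyadicIndex j x := by
  have h2 : (0 : ℝ) < 2 ^ j := by positivity
  simp only [dyadicCubeOf, dyadicIndex, Set.mem_ofPred_eq, funext_iff, Int.ceil_eq_iff,
    lt_div_iff₀ h2, div_le_iff₀ h2]

lemma mem_dyadicCubeOf_self (j : ℤ) (x : EuclideanSpace ℝ (Fin n)) : x ∈ dyadicCubeOf n j x :=
  mem_dyadicCubeOf_iff.2 rfl

lemma dyadicCubeOf_eq_of_mem {j : ℤ} {x y : EuclideanSpace ℝ (Fin n)}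
    (h : y ∈ dyadicCubeOf n j x) : dyadicCubeOf n j y = dyadicCubeOf n j x := by
  ext z
  rw [mem_dyadicCubeOf_iff, mem_dyadicCubeOf_iff, mem_dyadicCubeOf_iff.1 h]

lemma dyadicIndex_add_natCast (j : ℤ) (k : ℕ) (x : EuclideanSpace ℝ (Fin n)) (i : Fin n) :
    dyadicIndex (j + k) x i = -(-dyadicIndex j x i / 2 ^ k) := by
  have hdiv : -(x i / (2 : ℝ) ^ (j + (k : ℤ))) = -(x i / 2 ^ j) / ((2 ^ k : ℕ) : ℝ) := by
    rw [zpow_add₀ two_ne_zero, zpow_natCast, ← div_div, neg_div, Nat.cast_pow, Nat.cast_ofNat]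
  rw [dyadicIndex, dyadicIndex, ← neg_neg ⌈_⌉, ← Int.floor_neg, hdiv, Int.floor_div_natCast,
    Int.floor_neg, Nat.cast_pow, Nat.cast_ofNat]

lemma dyadicCubeOf_mono {i j : ℤ} (hij : i ≤ j) (x : EuclideanSpace ℝ (Fin n)) :
    dyadicCubeOf n i x ⊆ dyadicCubeOf n j x := by
  obtain ⟨k, rfl⟩ := Int.le.dest hij
  intro y hy
  rw [mem_dyadicCubeOf_iff] at hy ⊢
  ext l
  rw [dyadicIndex_add_natCast, dyadicIndex_add_natCast, hy]

lemma dyadicCubeOf_eq_cube (j : ℤ) (x : EuclideanSpace ℝ (Fin n)) :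
    dyadicCubeOf n j x =
      cube n (WithLp.toLp 2 fun i ↦ ((⌈x i / (2 : ℝ) ^ j⌉ : ℝ) - 1) * 2 ^ j) (2 ^ j) := by
  ext y
  simp only [dyadicCubeOf, cube, Set.mem_ofPred_eq, sub_one_mul, sub_add_cancel]

lemma cube_eq_preimage_pi_Ioc (a : EuclideanSpace ℝ (Fin n)) (ℓ : ℝ) :
    cube n a ℓ = (WithLp.ofLp : EuclideanSpace ℝ (Fin n) → (Fin n → ℝ)) ⁻¹'
      (Set.univ.pi fun i ↦ Set.Ioc (a i) (a i + ℓ)) := by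
  ext y
  simp only [cube, Set.mem_ofPred_eq, Set.mem_preimage, Set.mem_univ_pi, Set.mem_Ioc]

lemma volume_cube (a : EuclideanSpace ℝ (Fin n)) (ℓ : ℝ) :
    volume (cube n a ℓ) = ENNReal.ofReal ℓ ^ n := by
  rw [cube_eq_preimage_pi_Ioc, (PiLp.volume_preserving_ofLp (Fin n)).measure_preimage
    (MeasurableSet.univ_pi fun i ↦ measurableSet_Ioc).nullMeasurableSet, Real.volume_pi_Ioc]
  simp only [add_sub_cancel_left, Finset.prod_const, Finset.card_univ, Fintype.card_fin]

lemma volume_cube_ne_top (a : EuclideanSpace ℝ (Fin n)) (ℓ : ℝ) : volume (cube n a ℓ) ≠ ∞ := by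
  rw [volume_cube]
  exact ENNReal.pow_ne_top ENNReal.ofReal_ne_top

lemma volume_dyadicCubeOf_ne_top (j : ℤ) (x : EuclideanSpace ℝ (Fin n)) :
    volume (dyadicCubeOf n j x) ≠ ∞ := by
  rw [dyadicCubeOf_eq_cube]
  exact volume_cube_ne_top _ _

lemma volume_real_dyadicCubeOf (j : ℤ) (x : EuclideanSpace ℝ (Fin n)) :
    volume.real (dyadicCubeOf n j x) = ((2 : ℝ) ^ j) ^ n := by
  rw [dyadicCubeOf_eq_cube, Measure.real, volume_cube, ENNReal.toReal_pow,
    ENNReal.toReal_ofReal (by positivity)]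

lemma integrableOn_cube {b : EuclideanSpace ℝ (Fin n) → ℝ} (hb : LocallyIntegrable b volume)
    (a : EuclideanSpace ℝ (Fin n)) (ℓ : ℝ) : IntegrableOn b (cube n a ℓ) := by
  have hcompact : IsCompact ((EuclideanSpace.equiv (Fin n) ℝ) ⁻¹'
      (Set.univ.pi fun i ↦ Set.Icc (a i) (a i + ℓ))) :=
    (EuclideanSpace.equiv (Fin n) ℝ).toHomeomorph.isCompact_preimage.2
      (isCompact_univ_pi fun i ↦ isCompact_Icc)
  exact (hb.integrableOn_isCompact hcompact).mono_set fun y hy i _ ↦ ⟨(hy i).1.le, (hy i).2⟩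

lemma measurable_dyadicIndex_comp {t : EuclideanSpace ℝ (Fin n) → ℤ} (ht : Measurable t) :
    Measurable fun x ↦ dyadicIndex (t x) x := by
  refine measurable_pi_iff.2 fun i ↦ ?_
  have hpow : Measurable fun x ↦ (2 : ℝ) ^ t x :=
    (measurable_of_countable fun j : ℤ ↦ (2 : ℝ) ^ j).comp ht
  exact ((by fun_prop : Measurable fun x : EuclideanSpace ℝ (Fin n) ↦ x i).div hpow).ceil

lemma measurableSet_of_dyadicCubeOf_subset {J : ℤ} {U : Set (EuclideanSpace ℝ (Fin n))}
    (hU : ∀ x ∈ U, dyadicCubeOf n J x ⊆ U) : MeasurableSet U := by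
  have hpre : U = dyadicIndex J ⁻¹' (dyadicIndex J '' U) := by
    refine (Set.subset_preimage_image _ _).antisymm ?_
    rintro y ⟨x, hx, hxy⟩
    exact hU x hx (mem_dyadicCubeOf_iff.2 hxy.symm)
  rw [hpre]
  exact measurable_dyadicIndex_comp measurable_const (Set.to_countable _).measurableSet

lemma exists_dyadic_cover_cube (a : EuclideanSpace ℝ (Fin n)) {ℓ : ℝ} {J : ℤ}
    (hJ : (2 : ℝ) ^ J ≤ ℓ) :
    ∃ U, cube n a ℓ ⊆ U ∧ (∀ x ∈ U, dyadicCubeOf n J x ⊆ U) ∧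
      U ⊆ cube n (WithLp.toLp 2 fun i ↦ a i - ℓ) (3 * ℓ) := by
  refine ⟨{y | ∃ x ∈ cube n a ℓ, y ∈ dyadicCubeOf n J x},
    fun x hx ↦ ⟨x, hx, mem_dyadicCubeOf_self J x⟩, ?_, ?_⟩
  · rintro y ⟨x, hx, hy⟩ z hz
    exact ⟨x, hx, dyadicCubeOf_eq_of_mem hy ▸ hz⟩
  · rintro y ⟨x, hx, hy⟩ i
    have hyi := hy i
    have hxi := mem_dyadicCubeOf_self J x i
    have hQ := hx i
    rw [sub_one_mul] at hyi hxi
    constructor <;> dsimp only <;> linarith [hyi.1, hyi.2, hxi.1, hxi.2, hQ.1, hQ.2]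

lemma abs_dyadicAvg_sub_dyadicAvg_succ_le {b : EuclideanSpace ℝ (Fin n) → ℝ} {j : ℤ}
    {x : EuclideanSpace ℝ (Fin n)} (hb : IntegrableOn b (dyadicCubeOf n (j + 1) x)) {M : ℝ}
    (hosc : ⨍ y in dyadicCubeOf n (j + 1) x, |b y - dyadicAvg n (j + 1) b x| ≤ M) :
    |dyadicAvg n j b x - dyadicAvg n (j + 1) b x| ≤ 2 ^ n * M := by
  have hratio : volume.real (dyadicCubeOf n (j + 1) x) / volume.real (dyadicCubeOf n j x) =
      2 ^ n := by
    rw [volume_real_dyadicCubeOf, volume_real_dyadicCubeOf, ← div_pow,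
      zpow_add_one₀ two_ne_zero, mul_div_cancel_left₀ _ (by positivity)]
  have hne_zero : volume (dyadicCubeOf n j x) ≠ 0 := by
    rw [← measureReal_ne_zero_iff (volume_dyadicCubeOf_ne_top j x), volume_real_dyadicCubeOf]
    positivity
  refine (abs_setAverage_sub_le_of_subset (dyadicCubeOf_mono (by lia) x) hne_zero
    (volume_dyadicCubeOf_ne_top _ x) hb _).trans ?_
  rw [hratio]
  gcongr

/-- The label of the cube of the partition `{Q ∈ 𝒟_j : j ∈ ℤ, t = j on Q}` of `ℝⁿ` that contains
`x`. -/
def stoppedIndex (t : EuclideanSpace ℝ (Fin n) → ℤ) (x : EuclideanSpace ℝ (Fin n)) :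
    ℤ × (Fin n → ℤ) :=
  (t x, dyadicIndex (t x) x)

/-- The `σ`-algebra generated by the dyadic cubes on which the stopping time `t` equals their
scale, so that `E_t` is the conditional expectation given `stoppedSigmaAlgebra t`. -/
abbrev stoppedSigmaAlgebra (t : EuclideanSpace ℝ (Fin n) → ℤ) :
    MeasurableSpace (EuclideanSpace ℝ (Fin n)) :=
  MeasurableSpace.comap (stoppedIndex t) inferInstance

lemma measurable_stoppedIndex {t : EuclideanSpace ℝ (Fin n) → ℤ} (ht : Measurable t) :
    Measurable (stoppedIndex t) :=
  ht.prodMk (measurable_dyadicIndex_comp ht)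

lemma isDyadicStopping_const (j : ℤ) : IsDyadicStopping n fun _ ↦ j :=
  ⟨measurable_const, fun _ _ _ ↦ rfl⟩

namespace IsDyadicStopping

variable {s t : EuclideanSpace ℝ (Fin n) → ℤ}

lemma min_const (ht : IsDyadicStopping n t) (J : ℤ) : IsDyadicStopping n fun x ↦ min (t x) J := by
  refine ⟨ht.1.min measurable_const, fun x y hy ↦ ?_⟩
  simp only [ht.2 x y (dyadicCubeOf_mono (min_le_left _ _) x hy)]

lemma stoppedIndex_eq_iff (ht : IsDyadicStopping n t) {x y : EuclideanSpace ℝ (Fin n)} :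
    stoppedIndex t y = stoppedIndex t x ↔ y ∈ dyadicCubeOf n (t x) x := by
  rw [mem_dyadicCubeOf_iff, stoppedIndex, stoppedIndex, Prod.mk.injEq]
  constructor
  · rintro ⟨hty, hidx⟩
    rwa [hty] at hidx
  · intro hidx
    have hty := ht.2 x y (mem_dyadicCubeOf_iff.2 hidx)
    exact ⟨hty, by rwa [hty]⟩

lemma stoppedIndex_preimage_singleton (ht : IsDyadicStopping n t) (x : EuclideanSpace ℝ (Fin n)) :
    stoppedIndex t ⁻¹' {stoppedIndex t x} = dyadicCubeOf n (t x) x :=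
  Set.ext fun _ ↦ ht.stoppedIndex_eq_iff

lemma measurableSet_dyadicCubeOf (ht : IsDyadicStopping n t) (x : EuclideanSpace ℝ (Fin n)) :
    MeasurableSet[stoppedSigmaAlgebra t] (dyadicCubeOf n (t x) x) :=
  ⟨_, measurableSet_singleton _, ht.stoppedIndex_preimage_singleton x⟩

lemma stoppedSigmaAlgebra_le_of_forall (ht : IsDyadicStopping n t)
    {m : MeasurableSpace (EuclideanSpace ℝ (Fin n))}
    (h : ∀ x, MeasurableSet[m] (dyadicCubeOf n (t x) x)) : stoppedSigmaAlgebra t ≤ m := by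
  rintro _ ⟨B, -, rfl⟩
  rw [← Set.biUnion_of_singleton B, Set.preimage_iUnion₂]
  refine MeasurableSet.biUnion (Set.to_countable B) fun p _ ↦ ?_
  rcases (stoppedIndex t ⁻¹' {p}).eq_empty_or_nonempty with hempty | ⟨x, rfl⟩
  · rw [hempty]; exact MeasurableSet.empty
  · rw [ht.stoppedIndex_preimage_singleton]
    exact h x

lemma stoppedSigmaAlgebra_le_of_le (hs : IsDyadicStopping n s) (ht : IsDyadicStopping n t)
    (hst : ∀ x, s x ≤ t x) :
    stoppedSigmaAlgebra t ≤ stoppedSigmaAlgebra s := by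
  refine ht.stoppedSigmaAlgebra_le_of_forall fun x ↦ ?_
  refine ⟨stoppedIndex s '' dyadicCubeOf n (t x) x, (Set.to_countable _).measurableSet,
    (Set.subset_preimage_image _ _).antisymm' ?_⟩
  rintro z ⟨y, hy, hyz⟩
  rw [← dyadicCubeOf_eq_of_mem hy, ← ht.2 x y hy]
  exact dyadicCubeOf_mono (hst y) y (hs.stoppedIndex_eq_iff.1 hyz.symm)

lemma stoppedSigmaAlgebra_le (ht : IsDyadicStopping n t) :
    stoppedSigmaAlgebra t ≤ (inferInstance : MeasurableSpace (EuclideanSpace ℝ (Fin n))) :=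
  (measurable_stoppedIndex ht.1).comap_le

lemma condExp_stoppedSigmaAlgebra_ae_eq (ht : IsDyadicStopping n t)
    {U : Set (EuclideanSpace ℝ (Fin n))} (hU : ∀ x ∈ U, dyadicCubeOf n (t x) x ⊆ U)
    (hUm : MeasurableSet U) [IsFiniteMeasure (volume.restrict U)]
    {f : EuclideanSpace ℝ (Fin n) → ℝ} (hf : IntegrableOn f U) :
    (volume.restrict U)[f | stoppedSigmaAlgebra t] =ᵐ[volume.restrict U]
      fun x ↦ dyadicAvg n (t x) f x := by
  refine (condExp_comap_ae_eq_setAverage_fiber (measurable_stoppedIndex ht.1) hf).trans ?_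
  filter_upwards [ae_restrict_mem hUm] with x hx
  rw [ht.stoppedIndex_preimage_singleton, Measure.restrict_restrict_of_subset (hU x hx), dyadicAvg]

lemma condExp_abs_sub_condExp_stoppedSigmaAlgebra_le (ht : IsDyadicStopping n t)
    {U : Set (EuclideanSpace ℝ (Fin n))} (hU : ∀ x ∈ U, dyadicCubeOf n (t x) x ⊆ U)
    (hUm : MeasurableSet U) [IsFiniteMeasure (volume.restrict U)]
    {f : EuclideanSpace ℝ (Fin n) → ℝ} (hf : IntegrableOn f U) {M : ℝ}
    (hosc : ∀ x ∈ U, ⨍ y in dyadicCubeOf n (t x) x, |f y - dyadicAvg n (t x) f x| ≤ M) :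
    (volume.restrict U)[fun x ↦ |f x - ((volume.restrict U)[f | stoppedSigmaAlgebra t]) x| |
      stoppedSigmaAlgebra t] ≤ᵐ[volume.restrict U] fun _ ↦ M := by
  have habs : (fun x ↦ |f x - ((volume.restrict U)[f | stoppedSigmaAlgebra t]) x|)
      =ᵐ[volume.restrict U] fun x ↦ |f x - dyadicAvg n (t x) f x| :=
    (ht.condExp_stoppedSigmaAlgebra_ae_eq hU hUm hf).mono fun x hx ↦ by simp only [hx]
  have hint : IntegrableOn (fun x ↦ |f x - dyadicAvg n (t x) f x|) U :=
    (hf.sub integrable_condExp).abs.congr habs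
  refine (condExp_congr_ae habs).trans_le ?_
  filter_upwards [ht.condExp_stoppedSigmaAlgebra_ae_eq hU hUm hint, ae_restrict_mem hUm]
    with x hx hxU
  have havg : ∀ y ∈ dyadicCubeOf n (t x) x, dyadicAvg n (t y) f y = dyadicAvg n (t x) f x :=
    fun y hy ↦ by rw [ht.2 x y hy, dyadicAvg, dyadicCubeOf_eq_of_mem hy, dyadicAvg]
  rw [hx, dyadicAvg, setAverage_congr_fun
    (ht.stoppedSigmaAlgebra_le _ (ht.measurableSet_dyadicCubeOf x))
    (ae_of_all _ fun y hy ↦ by rw [havg y hy])]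
  exact hosc x hxU

end IsDyadicStopping

/-- The filtration of the `σ`-algebras generated by a decreasing sequence of dyadic stopping
times. -/
def stoppedFiltration (t : ℕ → EuclideanSpace ℝ (Fin n) → ℤ) (ht : ∀ k, IsDyadicStopping n (t k))
    (hdec : ∀ k x, t (k + 1) x ≤ t k x) :
    Filtration ℕ (inferInstance : MeasurableSpace (EuclideanSpace ℝ (Fin n))) where
  seq k := stoppedSigmaAlgebra (t k)
  mono' := monotone_nat_of_le_succ fun k ↦ (ht (k + 1)).stoppedSigmaAlgebra_le_of_le (ht k) (hdec k)
  le' k := (ht k).stoppedSigmaAlgebra_le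

/-- The filtration `𝒟_J, 𝒟_{J-1}, 𝒟_{J-2}, …` of `ℝⁿ`. -/
def dyadicFiltration (n : ℕ) (J : ℤ) :
    Filtration ℕ (inferInstance : MeasurableSpace (EuclideanSpace ℝ (Fin n))) :=
  stoppedFiltration (fun i _ ↦ J - i) (fun i ↦ isDyadicStopping_const (J - i)) fun i _ ↦ by lia

lemma IsDyadicStopping.stoppedSigmaAlgebra_le_iSup_dyadicFiltration
    {t : EuclideanSpace ℝ (Fin n) → ℤ} (ht : IsDyadicStopping n t) {J : ℤ} (hJ : ∀ x, t x ≤ J) :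
    stoppedSigmaAlgebra t ≤ ⨆ i, dyadicFiltration n J i := by
  refine ht.stoppedSigmaAlgebra_le_of_forall fun x ↦ ?_
  obtain ⟨i, hi⟩ := Int.eq_ofNat_of_zero_le (sub_nonneg.2 (hJ x))
  rw [show t x = J - i by lia]
  exact le_iSup (fun i ↦ (dyadicFiltration n J i : MeasurableSpace _)) i _
    ((isDyadicStopping_const (J - i)).measurableSet_dyadicCubeOf x)

section Saturated

variable {U : Set (EuclideanSpace ℝ (Fin n))} {J : ℤ} {b : EuclideanSpace ℝ (Fin n) → ℝ} {M : ℝ}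

lemma memLp_two_and_integral_sq_condExp_iSup_dyadicFiltration_sub_le
    (hU : ∀ x ∈ U, dyadicCubeOf n J x ⊆ U) [IsFiniteMeasure (volume.restrict U)]
    (hb : IntegrableOn b U)
    (hosc : ∀ j x, ⨍ y in dyadicCubeOf n j x, |b y - dyadicAvg n j b x| ≤ M) :
    MemLp ((volume.restrict U)[b | ⨆ i, dyadicFiltration n J i] -
        (volume.restrict U)[b | dyadicFiltration n J 0]) 2 (volume.restrict U) ∧
      ∫ x in U, (((volume.restrict U)[b | ⨆ i, dyadicFiltration n J i]) x -
          ((volume.restrict U)[b | dyadicFiltration n J 0]) x) ^ 2 ≤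
        (8 + (2 + 2 ^ n) ^ 2) * M ^ 2 * volume.real U := by
  have hUm : MeasurableSet U := measurableSet_of_dyadicCubeOf_subset hU
  have hM : 0 ≤ M := (integral_nonneg fun _ ↦ abs_nonneg _).trans (hosc 0 0)
  have hUi (i : ℕ) : ∀ x ∈ U, dyadicCubeOf n (J - i) x ⊆ U :=
    fun x hx ↦ (dyadicCubeOf_mono (by lia) x).trans (hU x hx)
  have hE (i : ℕ) : (volume.restrict U)[b | dyadicFiltration n J i] =ᵐ[volume.restrict U]
      fun x ↦ dyadicAvg n (J - i) b x :=
    (isDyadicStopping_const (J - i)).condExp_stoppedSigmaAlgebra_ae_eq (hUi i) hUm hb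
  have hjump (i : ℕ) : ∀ᵐ x ∂volume.restrict U,
      |((volume.restrict U)[b | dyadicFiltration n J (i + 1)]) x -
        ((volume.restrict U)[b | dyadicFiltration n J i]) x| ≤ 2 ^ n * M := by
    filter_upwards [hE i, hE (i + 1), ae_restrict_mem hUm] with x hx hx' hxU
    rw [hx, hx', show J - (i : ℤ) = J - (i + 1 : ℕ) + 1 by push_cast; ring]
    refine abs_dyadicAvg_sub_dyadicAvg_succ_le (hb.mono_set ?_) (hosc _ x)
    exact (dyadicCubeOf_mono (by push_cast; lia) x).trans (hU x hxU)
  have h := memLp_two_and_integral_sq_condExp_iSup_sub_le hb hM (fun i ↦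
    (isDyadicStopping_const (J - i)).condExp_abs_sub_condExp_stoppedSigmaAlgebra_le (hUi i) hUm hb
      fun x _ ↦ hosc (J - i) x) hjump
  rw [measureReal_restrict_apply_univ] at h
  exact ⟨h.1, h.2.trans_eq (by ring)⟩

lemma tsum_lintegral_sq_dyadicAvg_succ_sub_le_of_le
    (hU : ∀ x ∈ U, dyadicCubeOf n J x ⊆ U) (hUfin : volume U ≠ ∞) (hb : IntegrableOn b U)
    (hosc : ∀ j x, ⨍ y in dyadicCubeOf n j x, |b y - dyadicAvg n j b x| ≤ M)
    {s : ℕ → EuclideanSpace ℝ (Fin n) → ℤ} (hs : ∀ k, IsDyadicStopping n (s k))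
    (hdec : ∀ k x, s (k + 1) x ≤ s k x) (hsJ : ∀ k x, s k x ≤ J) :
    ∑' k, ∫⁻ x in U, .ofReal ((dyadicAvg n (s (k + 1) x) b x - dyadicAvg n (s k x) b x) ^ 2) ≤
      .ofReal ((8 + (2 + 2 ^ n) ^ 2) * M ^ 2) * volume U := by
  have : IsFiniteMeasure (volume.restrict U) := isFiniteMeasure_restrict.2 hUfin
  have hUm : MeasurableSet U := measurableSet_of_dyadicCubeOf_subset hU
  obtain ⟨hLp, hle⟩ :=
    memLp_two_and_integral_sq_condExp_iSup_dyadicFiltration_sub_le hU hb hosc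
  have hE (k : ℕ) : (volume.restrict U)[b | stoppedFiltration s hs hdec k] =ᵐ[volume.restrict U]
      fun x ↦ dyadicAvg n (s k x) b x :=
    (hs k).condExp_stoppedSigmaAlgebra_ae_eq
      (fun x hx ↦ (dyadicCubeOf_mono (hsJ k x) x).trans (hU x hx)) hUm hb
  have h0 (k : ℕ) : dyadicFiltration n J 0 ≤ stoppedFiltration s hs hdec k :=
    (hs k).stoppedSigmaAlgebra_le_of_le (isDyadicStopping_const _) fun x ↦ by
      simpa using hsJ k x
  calc ∑' k, ∫⁻ x in U, .ofReal ((dyadicAvg n (s (k + 1) x) b x - dyadicAvg n (s k x) b x) ^ 2)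
      = ∑' k, ∫⁻ x in U, .ofReal
          ((((volume.restrict U)[b | stoppedFiltration s hs hdec (k + 1)]) x -
            ((volume.restrict U)[b | stoppedFiltration s hs hdec k]) x) ^ 2) := by
        refine tsum_congr fun k ↦ lintegral_congr_ae ?_
        filter_upwards [hE k, hE (k + 1)] with x hx hx'
        rw [hx, hx']
    _ ≤ .ofReal (∫ x in U, (((volume.restrict U)[b | ⨆ i, dyadicFiltration n J i]) x -
          ((volume.restrict U)[b | dyadicFiltration n J 0]) x) ^ 2) :=
        tsum_lintegral_sq_condExp_succ_sub_condExp_le_of_le _ h0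
          (fun k ↦ (hs k).stoppedSigmaAlgebra_le_iSup_dyadicFiltration (hsJ k))
          (iSup_le (dyadicFiltration n J).le) hLp
    _ ≤ .ofReal ((8 + (2 + 2 ^ n) ^ 2) * M ^ 2 * volume.real U) := ENNReal.ofReal_le_ofReal hle
    _ = .ofReal ((8 + (2 + 2 ^ n) ^ 2) * M ^ 2) * volume U := by
        rw [ENNReal.ofReal_mul (by positivity), ofReal_measureReal hUfin]

end Saturated

end DyadicCubes

theorem stmt10_general (n : ℕ) (b : EuclideanSpace ℝ (Fin n) → ℝ)
    (hb : LocallyIntegrable b volume) (M : ℝ)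
    (hosc : ∀ j x, ⨍ y in dyadicCubeOf n j x, |b y - dyadicAvg n j b x| ≤ M)
    (t : ℕ → EuclideanSpace ℝ (Fin n) → ℤ) (ht : ∀ k, IsDyadicStopping n (t k))
    (hdec : ∀ k x, t (k + 1) x ≤ t k x) (a : EuclideanSpace ℝ (Fin n)) (ℓ : ℝ) (hℓ : 0 < ℓ) :
    ∑' k : ℕ, ∫⁻ x in cube n a ℓ,
        ({x : EuclideanSpace ℝ (Fin n) | (2 : ℝ) ^ (t k x) ≤ ℓ}).indicator
          (fun x ↦ .ofReal ((dyadicAvg n (t (k + 1) x) b x - dyadicAvg n (t k x) b x) ^ 2)) x ≤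
      .ofReal ((8 + (2 + 2 ^ n) ^ 2) * 3 ^ n * M ^ 2) * volume (cube n a ℓ) := by
  set J := Int.log 2 ℓ
  have hJ : (2 : ℝ) ^ J ≤ ℓ := Int.zpow_log_le_self one_lt_two hℓ
  obtain ⟨U, hQU, hU, hUQ⟩ := exists_dyadic_cover_cube a hJ
  have hUvol : volume U ≤ 3 ^ n * volume (cube n a ℓ) := by
    refine (measure_mono hUQ).trans_eq ?_
    rw [volume_cube, volume_cube, ENNReal.ofReal_mul zero_le_three, mul_pow, ENNReal.ofReal_ofNat]
  have hclamp (k : ℕ) (x : EuclideanSpace ℝ (Fin n)) :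
      ({x | (2 : ℝ) ^ (t k x) ≤ ℓ}).indicator
          (fun x ↦ ENNReal.ofReal
            ((dyadicAvg n (t (k + 1) x) b x - dyadicAvg n (t k x) b x) ^ 2)) x ≤
        .ofReal
          ((dyadicAvg n (min (t (k + 1) x) J) b x - dyadicAvg n (min (t k x) J) b x) ^ 2) := by
    refine Set.indicator_apply_le' (fun hx ↦ ?_) fun _ ↦ zero_le
    have htJ : t k x ≤ J := (Int.zpow_le_iff_le_log one_lt_two hℓ).1 hx
    rw [min_eq_left htJ, min_eq_left ((hdec k x).trans htJ)]
  calc _ ≤ ∑' k, ∫⁻ x in U, .ofReal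
          ((dyadicAvg n (min (t (k + 1) x) J) b x - dyadicAvg n (min (t k x) J) b x) ^ 2) :=
        ENNReal.tsum_le_tsum fun k ↦
          (lintegral_mono (hclamp k)).trans (lintegral_mono_set hQU)
    _ ≤ .ofReal ((8 + (2 + 2 ^ n) ^ 2) * M ^ 2) * volume U :=
        tsum_lintegral_sq_dyadicAvg_succ_sub_le_of_le (s := fun k x ↦ min (t k x) J) hU
          (measure_ne_top_of_subset hUQ (volume_cube_ne_top _ _))
          ((integrableOn_cube hb _ _).mono_set hUQ) hosc (fun k ↦ (ht k).min_const J)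
          (fun k x ↦ min_le_min_right J (hdec k x)) fun k x ↦ min_le_right _ _
    _ ≤ .ofReal ((8 + (2 + 2 ^ n) ^ 2) * M ^ 2) * (3 ^ n * volume (cube n a ℓ)) := by gcongr
    _ = .ofReal ((8 + (2 + 2 ^ n) ^ 2) * 3 ^ n * M ^ 2) * volume (cube n a ℓ) := by
        rw [mul_right_comm, ENNReal.ofReal_mul (q := 3 ^ n) (by positivity),
          ENNReal.ofReal_pow zero_le_three, ENNReal.ofReal_ofNat, mul_assoc]

theorem stmt10 (n : ℕ) (hn : 1 ≤ n) :
    ∃ C : ℝ, 0 < C ∧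
      ∀ b : EuclideanSpace ℝ (Fin n) → ℝ, LocallyIntegrable b volume →
      ∀ M : ℝ, 0 ≤ M →
      -- b ∈ BMO with ‖b‖_{BMO} ≤ M
      (∀ (a : EuclideanSpace ℝ (Fin n)) (ℓ : ℝ), 0 < ℓ →
        ⨍ y in cube n a ℓ, |b y - ⨍ z in cube n a ℓ, b z| ≤ M) →
      -- any decreasing sequence of dyadic stopping times
      ∀ t : ℕ → EuclideanSpace ℝ (Fin n) → ℤ,
        (∀ k, IsDyadicStopping n (t k)) →
        (∀ k x, t (k + 1) x ≤ t k x) →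
      ∀ (a : EuclideanSpace ℝ (Fin n)) (ℓ : ℝ), 0 < ℓ →
      ∑' k : ℕ,
          ∫⁻ x in cube n a ℓ,
            ({x : EuclideanSpace ℝ (Fin n) | (2:ℝ) ^ (t k x) ≤ ℓ}).indicator
              (fun x => ENNReal.ofReal
                ((dyadicAvg n (t (k + 1) x) b x - dyadicAvg n (t k x) b x) ^ 2)) x
        ≤ ENNReal.ofReal (C * M ^ 2) * volume (cube n a ℓ) := by
  refine ⟨(8 + (2 + 2 ^ n) ^ 2) * 3 ^ n, by positivity,
    fun b hb M _ hosc t ht hdec a ℓ hℓ ↦ stmt10_general n b hb M (fun j x ↦ ?_) t ht hdec a ℓ hℓ⟩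
  simpa only [dyadicAvg, dyadicCubeOf_eq_cube] using hosc _ (2 ^ j) (by positivity)
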